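/- Let μ ∈ 𝒲_1(ℝ²). Then the following are equivalent: (i) μ is supported on a diagonal line L_{ε,a} for some ε ∈ {−1,1} and a ∈ ℝ; (ii) for every ν ∈ 𝒲_1(ℝ²) there exists η ∈ 𝒲_1(ℝ²) such that d_{W_1}(μ, ν) = d_{W_1}(ν, η) = (1/2)·d_{W_1}(μ, η). -/

import Mathlib

open MeasureTheory

/-- The `p`-Wasserstein distance between two measures, defined as the infimum over all
couplings `π` of `μ` and `ν` of `(∬ d(x,y)^p dπ)^(1/p)`. -/
noncomputable def Wdist {X : Type*} [MeasurableSpace X] [PseudoMetricSpace X] (p : ℝ)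
    (μ ν : Measure X) : ℝ :=
  (⨅ π ∈ {π : Measure (X × X) | π.map Prod.fst = μ ∧ π.map Prod.snd = ν},
    (∫⁻ q, edist q.1 q.2 ^ p ∂π) ^ (1 / p)).toReal

/-- The `p`-Wasserstein space over `X`: Borel probability measures on `X` with finite
`p`-th moment. -/
def WSet (X : Type*) [MeasurableSpace X] [PseudoMetricSpace X] (p : ℝ) : Set (Measure X) :=
  {μ | IsProbabilityMeasure μ ∧ ∃ x₀ : X, ∫⁻ x, edist x x₀ ^ p ∂μ < ⊤}

/-- An isometry of the underlying metric space: a distance-preserving bijection. -/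
def IsIsom {X : Type*} [PseudoMetricSpace X] (T : X → X) : Prop :=
  Function.Bijective T ∧ ∀ x y, dist (T x) (T y) = dist x y

/-- An isometry of the `p`-Wasserstein space over `X`: a bijection of the space of
probability measures with finite `p`-th moment preserving the Wasserstein distance. -/
def IsWIsometry (X : Type*) [MeasurableSpace X] [PseudoMetricSpace X] (p : ℝ)
    (Φ : Measure X → Measure X) : Prop :=
  Set.BijOn Φ (WSet X p) (WSet X p) ∧
    ∀ μ ∈ WSet X p, ∀ ν ∈ WSet X p, Wdist p (Φ μ) (Φ ν) = Wdist p μ ν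

/-- The (topological) support of a measure. -/
def msupport {X : Type*} [TopologicalSpace X] [MeasurableSpace X] (μ : Measure X) : Set X :=
  {x | ∀ U : Set X, IsOpen U → x ∈ U → μ U ≠ 0}

def diagLine (ε a : ℝ) : Set (ℝ × ℝ) := {z | z.2 = ε * z.1 + a}

def Lplus : Set (ℝ × ℝ) := {z | z.2 = z.1}

def Lminus : Set (ℝ × ℝ) := {z | z.2 = -z.1}

/-- The closed square `Q = [-1,1]²`. -/
abbrev Qs : Set (ℝ × ℝ) := Set.Icc (-1, -1) (1, 1)

def LplusQ : Set ↥Qs := {q | (q : ℝ × ℝ).2 = (q : ℝ × ℝ).1}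

def LminusQ : Set ↥Qs := {q | (q : ℝ × ℝ).2 = -(q : ℝ × ℝ).1}

/-!
In the coordinates `(x₂ ± x₁) / 2` the maximum metric becomes the `ℓ¹` metric and the diagonal
lines become the lines parallel to an axis.

If `μ` lives on the diagonal line `L`, push every point away from `L`, in the direction of the
other diagonal, by the amount `c = W₁(μ, ν)`. This increases all distances to points of `L` by
exactly `c`, so the image `η` of `ν` satisfies `W₁(ν, η) = c` and `W₁(μ, η) = W₁(μ, ν) + c`.

Conversely, let `η` be a symmetric point of `μ` with respect to a Dirac mass at `y`. The product
coupling of `μ` and `η` is then optimal, so there is `z ≠ y` such that `y` lies metrically between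
`x` and `z` for `μ`-almost every `x`. Betweenness in `ℓ¹` is betweenness in both coordinates, so in
some coordinate `μ` lies on one side of `y`. If neither coordinate were constant on the support of
`μ`, then some `y` would have mass of `μ` strictly on both sides in both coordinates.
-/

open Set Function
open scoped ENNReal

section Coupling

variable {α β γ : Type*} [MeasurableSpace α] [MeasurableSpace β] [MeasurableSpace γ]
  {μ : Measure α} {ν : Measure β} {π : Measure (α × β)}

/-- `π` is a coupling of `μ` and `ν`: a measure on the product with these marginals. -/
structure IsCoupling (π : Measure (α × β)) (μ : Measure α) (ν : Measure β) : Prop where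
  fst_eq : π.fst = μ
  snd_eq : π.snd = ν

namespace IsCoupling

lemma swap (h : IsCoupling π μ ν) : IsCoupling (π.map Prod.swap) ν μ :=
  ⟨Measure.fst_map_swap.trans h.snd_eq, Measure.snd_map_swap.trans h.fst_eq⟩

lemma isProbabilityMeasure [IsProbabilityMeasure μ] (h : IsCoupling π μ ν) :
    IsProbabilityMeasure π :=
  ⟨by rw [← Measure.fst_univ, h.fst_eq, measure_univ]⟩

lemma lintegral_fst (h : IsCoupling π μ ν) {f : α → ℝ≥0∞} (hf : Measurable f) :
    ∫⁻ q, f q.1 ∂π = ∫⁻ x, f x ∂μ := by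
  rw [← h.fst_eq, Measure.fst, lintegral_map hf measurable_fst]

lemma lintegral_snd (h : IsCoupling π μ ν) {f : β → ℝ≥0∞} (hf : Measurable f) :
    ∫⁻ q, f q.2 ∂π = ∫⁻ y, f y ∂ν := by
  rw [← h.snd_eq, Measure.snd, lintegral_map hf measurable_snd]

lemma ae_fst (h : IsCoupling π μ ν) {p : α → Prop} (hp : ∀ᵐ x ∂μ, p x) : ∀ᵐ q ∂π, p q.1 := by
  rw [← h.fst_eq] at hp
  exact ae_of_ae_map measurable_fst.aemeasurable hp

lemma ae_snd (h : IsCoupling π μ ν) {p : β → Prop} (hp : ∀ᵐ y ∂ν, p y) : ∀ᵐ q ∂π, p q.2 := by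
  rw [← h.snd_eq] at hp
  exact ae_of_ae_map measurable_snd.aemeasurable hp

protected lemma prod (μ : Measure α) (ν : Measure β) [IsProbabilityMeasure μ]
    [IsProbabilityMeasure ν] : IsCoupling (μ.prod ν) μ ν :=
  ⟨Measure.fst_prod, Measure.snd_prod⟩

lemma map_prodMk (μ : Measure α) {T : α → β} (hT : Measurable T) :
    IsCoupling (μ.map fun x ↦ (x, T x)) μ (μ.map T) :=
  ⟨(Measure.fst_map_prodMk hT).trans Measure.map_id, Measure.snd_map_prodMk measurable_id⟩

lemma map_right (h : IsCoupling π μ ν) {T : β → γ} (hT : Measurable T) :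
    IsCoupling (π.map (Prod.map id T)) μ (ν.map T) where
  fst_eq := (Measure.fst_map_prodMk (hT.comp measurable_snd)).trans h.fst_eq
  snd_eq := by
    rw [← h.snd_eq, Measure.snd, Measure.snd, Measure.map_map hT measurable_snd]
    exact Measure.map_map measurable_snd (measurable_id.prodMap hT)

lemma exists_map_right_eq {T : β → γ} (hT : MeasurableEmbedding T) {π : Measure (α × γ)}
    (h : IsCoupling π μ (ν.map T)) :
    ∃ π', IsCoupling π' μ ν ∧ π'.map (Prod.map id T) = π := by
  have hF : MeasurableEmbedding (Prod.map id T : α × β → α × γ) :=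
    MeasurableEmbedding.id.prodMap hT
  have hrange : ∀ᵐ q ∂π, q ∈ range (Prod.map id T : α × β → α × γ) := by
    filter_upwards [h.ae_snd (hT.ae_map_iff.2 (.of_forall mem_range_self))] with q ⟨y, hy⟩
    exact ⟨(q.1, y), Prod.ext rfl hy⟩
  have hmap : (π.comap (Prod.map id T)).map (Prod.map id T) = π := by
    rw [hF.map_comap, Measure.restrict_eq_self_of_ae_mem hrange]
  have hπ : IsCoupling (π.comap (Prod.map id T)) (π.comap (Prod.map id T)).fst
    (π.comap (Prod.map id T)).snd := ⟨rfl, rfl⟩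
  have hπT := hπ.map_right hT.measurable
  rw [hmap] at hπT
  exact ⟨_, ⟨hπT.fst_eq.symm.trans h.fst_eq,
    hT.map_injective (hπT.snd_eq.symm.trans h.snd_eq)⟩, hmap⟩

end IsCoupling

end Coupling

section EWdist

lemma lintegral_add_const_of_isProbabilityMeasure {α : Type*} [MeasurableSpace α]
    {μ : Measure α} [IsProbabilityMeasure μ] (f : α → ℝ≥0∞) (c : ℝ≥0∞) :
    ∫⁻ x, (f x + c) ∂μ = ∫⁻ x, f x ∂μ + c := by
  rw [lintegral_add_right _ measurable_const, lintegral_const, measure_univ, mul_one]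

variable {X : Type*} [MeasurableSpace X] [PseudoEMetricSpace X] {μ ν η : Measure X}
  {T : X → X} {c : ℝ≥0∞}

/-- The `1`-Wasserstein distance as an extended nonnegative real, so that the value `∞` is not
lost as it is in `Wdist 1`. -/
noncomputable def eWdist (μ ν : Measure X) : ℝ≥0∞ :=
  ⨅ (π : Measure (X × X)) (_ : IsCoupling π μ ν), ∫⁻ q, edist q.1 q.2 ∂π

lemma eWdist_le_lintegral {π : Measure (X × X)} (h : IsCoupling π μ ν) :
    eWdist μ ν ≤ ∫⁻ q, edist q.1 q.2 ∂π :=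
  iInf₂_le π h

lemma le_eWdist (h : ∀ π, IsCoupling π μ ν → c ≤ ∫⁻ q, edist q.1 q.2 ∂π) : c ≤ eWdist μ ν :=
  le_iInf₂ h

lemma eWdist_comm (μ ν : Measure X) : eWdist μ ν = eWdist ν μ := by
  have key (μ ν : Measure X) : eWdist μ ν ≤ eWdist ν μ := le_eWdist fun π hπ ↦ calc
    eWdist μ ν ≤ ∫⁻ q, edist q.1 q.2 ∂(π.map Prod.swap) := eWdist_le_lintegral hπ.swap
    _ ≤ ∫⁻ q, edist q.2 q.1 ∂π := lintegral_map_le _ _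
    _ = ∫⁻ q, edist q.1 q.2 ∂π := by simp only [edist_comm]
  exact (key μ ν).antisymm (key ν μ)

lemma eWdist_map_self_le [IsProbabilityMeasure ν] (hT : Measurable T)
    (hmove : ∀ y, edist y (T y) ≤ c) : eWdist ν (ν.map T) ≤ c := calc
  eWdist ν (ν.map T) ≤ ∫⁻ y, edist y (T y) ∂ν :=
    (eWdist_le_lintegral (.map_prodMk ν hT)).trans (lintegral_map_le _ _)
  _ ≤ ∫⁻ _, c ∂ν := lintegral_mono hmove
  _ = c := by simp

lemma eWdist_map_le_add [IsProbabilityMeasure μ] (hT : Measurable T)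
    (hmove : ∀ y, edist y (T y) ≤ c) : eWdist μ (ν.map T) ≤ eWdist μ ν + c := by
  rw [← tsub_le_iff_right]
  refine le_eWdist fun π hπ ↦ tsub_le_iff_right.2 ?_
  have hπ_prob := hπ.isProbabilityMeasure
  calc
    eWdist μ (ν.map T) ≤ ∫⁻ q, edist q.1 (T q.2) ∂π :=
      (eWdist_le_lintegral (hπ.map_right hT)).trans (lintegral_map_le _ _)
    _ ≤ ∫⁻ q, (edist q.1 q.2 + c) ∂π := lintegral_mono fun q ↦
      (edist_triangle _ q.2 _).trans (add_le_add_right (hmove q.2) _)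
    _ = ∫⁻ q, edist q.1 q.2 ∂π + c := lintegral_add_const_of_isProbabilityMeasure _ _

lemma eWdist_add_le_eWdist_map [IsProbabilityMeasure μ] {L : Set X} (hμL : ∀ᵐ x ∂μ, x ∈ L)
    (hT : MeasurableEmbedding T) (haway : ∀ x ∈ L, ∀ y, edist x y + c ≤ edist x (T y)) :
    eWdist μ ν + c ≤ eWdist μ (ν.map T) := by
  refine le_eWdist fun π' hπ' ↦ ?_
  obtain ⟨π, hπ, rfl⟩ := hπ'.exists_map_right_eq hT
  have hπ_prob := hπ.isProbabilityMeasure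
  calc
    eWdist μ ν + c ≤ ∫⁻ q, edist q.1 q.2 ∂π + c := by gcongr; exact eWdist_le_lintegral hπ
    _ = ∫⁻ q, (edist q.1 q.2 + c) ∂π := (lintegral_add_const_of_isProbabilityMeasure _ _).symm
    _ ≤ ∫⁻ q, edist q.1 (T q.2) ∂π := lintegral_mono_ae <| by
      filter_upwards [hπ.ae_fst hμL] with q hq using haway q.1 hq q.2
    _ = ∫⁻ q, edist q.1 q.2 ∂(π.map (Prod.map id T)) :=
      ((MeasurableEmbedding.id.prodMap hT).lintegral_map fun q ↦ edist q.1 q.2).symm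

lemma lintegral_le_lintegral_add_eWdist {f : X → ℝ≥0∞} (hf : Measurable f)
    (hlip : ∀ x y, f y ≤ f x + edist x y) : ∫⁻ y, f y ∂ν ≤ ∫⁻ x, f x ∂μ + eWdist μ ν := by
  rw [← tsub_le_iff_left]
  refine le_eWdist fun π hπ ↦ tsub_le_iff_left.2 ?_
  calc
    ∫⁻ y, f y ∂ν = ∫⁻ q, f q.2 ∂π := (hπ.lintegral_snd hf).symm
    _ ≤ ∫⁻ q, (f q.1 + edist q.1 q.2) ∂π := lintegral_mono fun q ↦ hlip q.1 q.2
    _ = ∫⁻ x, f x ∂μ + ∫⁻ q, edist q.1 q.2 ∂π := by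
      rw [lintegral_add_left (by fun_prop), hπ.lintegral_fst hf]

variable [OpensMeasurableSpace X]

lemma lintegral_edist_le_lintegral_edist_add_eWdist (x₀ : X) :
    ∫⁻ y, edist y x₀ ∂ν ≤ ∫⁻ x, edist x x₀ ∂μ + eWdist μ ν :=
  lintegral_le_lintegral_add_eWdist measurable_edist_left fun x y ↦ by
    rw [add_comm, edist_comm x y]; exact edist_triangle y x x₀

lemma le_eWdist_map_self [IsProbabilityMeasure ν] (hT : Measurable T) {x₀ : X}
    (hν : ∫⁻ y, edist y x₀ ∂ν ≠ ∞) (haway : ∀ y, edist x₀ y + c ≤ edist x₀ (T y)) :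
    c ≤ eWdist ν (ν.map T) := by
  refine (ENNReal.add_le_add_iff_left hν).1 ?_
  calc
    ∫⁻ y, edist y x₀ ∂ν + c = ∫⁻ y, (edist y x₀ + c) ∂ν :=
      (lintegral_add_const_of_isProbabilityMeasure _ _).symm
    _ ≤ ∫⁻ y, edist (T y) x₀ ∂ν := lintegral_mono fun y ↦ by
      simpa only [edist_comm x₀] using haway y
    _ = ∫⁻ z, edist z x₀ ∂(ν.map T) := (lintegral_map measurable_edist_left hT).symm
    _ ≤ ∫⁻ y, edist y x₀ ∂ν + eWdist ν (ν.map T) :=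
      lintegral_edist_le_lintegral_edist_add_eWdist x₀

lemma lintegral_prod_edist_add [IsProbabilityMeasure μ] [IsProbabilityMeasure ν] (x₀ : X) :
    ∫⁻ q, (edist q.1 x₀ + edist x₀ q.2) ∂(μ.prod ν) =
      ∫⁻ x, edist x x₀ ∂μ + ∫⁻ y, edist y x₀ ∂ν := by
  simp only [edist_comm x₀]
  rw [lintegral_add_left (by fun_prop),
    (IsCoupling.prod μ ν).lintegral_fst measurable_edist_left,
    (IsCoupling.prod μ ν).lintegral_snd measurable_edist_left]

lemma eWdist_le_lintegral_edist_add [IsProbabilityMeasure μ] [IsProbabilityMeasure ν] (x₀ : X) :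
    eWdist μ ν ≤ ∫⁻ x, edist x x₀ ∂μ + ∫⁻ y, edist y x₀ ∂ν := by
  rw [← lintegral_prod_edist_add]
  exact (eWdist_le_lintegral (.prod μ ν)).trans (lintegral_mono fun q ↦ edist_triangle _ _ _)

lemma eWdist_dirac_right [IsProbabilityMeasure μ] (y : X) :
    eWdist μ (.dirac y) = ∫⁻ x, edist x y ∂μ := by
  have hy : ∫⁻ x, edist x y ∂(.dirac y) = 0 := by
    rw [lintegral_dirac' y measurable_edist_left, edist_self]
  refine le_antisymm ?_ ?_
  · simpa only [hy, add_zero] using eWdist_le_lintegral_edist_add (μ := μ) (ν := .dirac y) y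
  · rw [eWdist_comm]
    simpa only [hy, zero_add] using
      lintegral_edist_le_lintegral_edist_add_eWdist (μ := .dirac y) (ν := μ) y

lemma ae_ae_edist_add_edist_eq [IsProbabilityMeasure μ] [IsProbabilityMeasure ν] {y : X}
    (h : eWdist μ ν = eWdist μ (.dirac y) + eWdist (.dirac y) ν) (hfin : eWdist μ ν ≠ ∞) :
    ∀ᵐ x ∂μ, ∀ᵐ z ∂ν, edist x z = edist x y + edist y z := by
  have hsum : ∫⁻ q, (edist q.1 y + edist y q.2) ∂(μ.prod ν) = eWdist μ ν := by
    rw [lintegral_prod_edist_add, h, eWdist_comm (.dirac y), eWdist_dirac_right,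
      eWdist_dirac_right]
  have hle (q : X × X) : edist q.1 q.2 ≤ edist q.1 y + edist y q.2 := edist_triangle _ _ _
  have hprod : ∀ᵐ q ∂(μ.prod ν), edist q.1 q.2 = edist q.1 y + edist y q.2 := by
    refine ae_eq_of_ae_le_of_lintegral_le (.of_forall hle) ?_ (by fun_prop) ?_
    · exact ne_top_of_le_ne_top hfin ((lintegral_mono hle).trans_eq hsum)
    · exact hsum.trans_le (eWdist_le_lintegral (.prod μ ν))
  exact Measure.ae_ae_of_ae_prod hprod

/-- `η` is a symmetric point of `μ` with respect to `ν`: the measure `ν` lies halfway between `μ`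
and `η`, the distances being taken in `[0, ∞]`. -/
structure IsSymmetricPoint (μ ν η : Measure X) : Prop where
  eWdist_eq : eWdist μ ν = eWdist ν η
  eWdist_eq_add : eWdist μ η = eWdist μ ν + eWdist ν η

lemma isSymmetricPoint_map [IsProbabilityMeasure μ] [IsProbabilityMeasure ν] {L : Set X}
    (hμL : ∀ᵐ x ∂μ, x ∈ L) (hν : ∀ x₀, ∫⁻ y, edist y x₀ ∂ν ≠ ∞) (hT : MeasurableEmbedding T)
    (hmove : ∀ y, edist y (T y) ≤ eWdist μ ν)
    (haway : ∀ x ∈ L, ∀ y, edist x y + eWdist μ ν ≤ edist x (T y)) :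
    IsSymmetricPoint μ ν (ν.map T) := by
  obtain ⟨x₀, hx₀⟩ := hμL.exists
  have hνT : eWdist μ ν = eWdist ν (ν.map T) :=
    (le_eWdist_map_self hT.measurable (hν x₀) (haway x₀ hx₀)).antisymm
      (eWdist_map_self_le hT.measurable hmove)
  refine ⟨hνT, ?_⟩
  rw [← hνT]
  exact (eWdist_map_le_add hT.measurable hmove).antisymm (eWdist_add_le_eWdist_map hμL hT haway)

end EWdist

section DiracSymmetricPoint

variable {X : Type*} [MeasurableSpace X] [EMetricSpace X] [OpensMeasurableSpace X]
  {μ η : Measure X} {y : X}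

lemma eWdist_dirac_right_eq_zero_iff [IsProbabilityMeasure μ] :
    eWdist μ (.dirac y) = 0 ↔ ∀ᵐ x ∂μ, x = y := by
  rw [eWdist_dirac_right, lintegral_eq_zero_iff measurable_edist_left]
  simp only [Filter.EventuallyEq, Pi.zero_apply, edist_eq_zero]

lemma IsSymmetricPoint.exists_ae_edist_add_edist_eq [IsProbabilityMeasure μ]
    [IsProbabilityMeasure η] (h : IsSymmetricPoint μ (.dirac y) η) (hfin : eWdist μ η ≠ ∞)
    (hμ : ¬ ∀ᵐ x ∂μ, x = y) :
    ∃ z ≠ y, ∀ᵐ x ∂μ, edist x z = edist x y + edist y z := by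
  have hη : ∃ᵐ z ∂η, z ≠ y := fun hη_eq ↦ hμ <| by
    rw [← eWdist_dirac_right_eq_zero_iff, h.eWdist_eq, eWdist_comm, eWdist_dirac_right_eq_zero_iff]
    exact hη_eq.mono fun z ↦ not_not.1
  have hbetween : ∀ᵐ z ∂η, ∀ᵐ x ∂μ, edist z x = edist z y + edist y x := by
    refine ae_ae_edist_add_edist_eq ?_ (by rwa [eWdist_comm])
    rw [eWdist_comm η, eWdist_comm η, eWdist_comm _ μ, add_comm, h.eWdist_eq_add]
  obtain ⟨z, hzy, hz⟩ := (hη.and_eventually hbetween).exists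
  refine ⟨z, hzy, hz.mono fun x hx ↦ ?_⟩
  rw [edist_comm x z, hx, edist_comm x y, edist_comm y z, add_comm]

end DiracSymmetricPoint

section Wdist

variable {X : Type*} [MeasurableSpace X] [PseudoMetricSpace X] {μ ν η : Measure X}

lemma Wdist_one_eq_toReal_eWdist (μ ν : Measure X) : Wdist 1 μ ν = (eWdist μ ν).toReal := by
  have hcoupling (π : Measure (X × X)) :
      π.map Prod.fst = μ ∧ π.map Prod.snd = ν ↔ IsCoupling π μ ν :=
    ⟨fun h ↦ ⟨h.1, h.2⟩, fun h ↦ ⟨h.1, h.2⟩⟩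
  simp only [Wdist, eWdist, mem_ofPred_eq, hcoupling, ENNReal.rpow_one, div_one]

lemma lintegral_edist_ne_top_of_mem_WSet (hμ : μ ∈ WSet X 1) (x₀ : X) :
    ∫⁻ x, edist x x₀ ∂μ ≠ ∞ := by
  obtain ⟨hprob, x₁, hx₁⟩ := hμ
  simp only [ENNReal.rpow_one] at hx₁
  refine ne_top_of_le_ne_top ?_ (lintegral_mono fun x ↦ edist_triangle x x₁ x₀)
  rw [lintegral_add_const_of_isProbabilityMeasure]
  exact ENNReal.add_ne_top.2 ⟨hx₁.ne, edist_ne_top x₁ x₀⟩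

lemma dirac_mem_WSet [OpensMeasurableSpace X] (y : X) : .dirac y ∈ WSet X 1 := by
  refine ⟨inferInstance, y, ?_⟩
  simp only [ENNReal.rpow_one]
  rw [lintegral_dirac' y measurable_edist_left, edist_self]
  exact ENNReal.zero_lt_top

lemma map_mem_WSet {T : X → X} (hT : Measurable T) {c : ℝ≥0∞} (hc : c ≠ ∞)
    (hmove : ∀ y, edist y (T y) ≤ c) (hν : ν ∈ WSet X 1) : ν.map T ∈ WSet X 1 := by
  have hprob := hν.1
  obtain ⟨x₀, -⟩ := hν.2
  refine ⟨Measure.isProbabilityMeasure_map hT.aemeasurable, x₀, lt_top_iff_ne_top.2 ?_⟩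
  simp only [ENNReal.rpow_one]
  have hle (y : X) : edist (T y) x₀ ≤ edist y x₀ + c := by
    rw [add_comm]
    exact (edist_triangle_left _ _ y).trans (add_le_add_left (hmove y) _)
  refine ne_top_of_le_ne_top ?_ ((lintegral_map_le _ T).trans (lintegral_mono hle))
  rw [lintegral_add_const_of_isProbabilityMeasure]
  exact ENNReal.add_ne_top.2 ⟨lintegral_edist_ne_top_of_mem_WSet hν x₀, hc⟩

lemma eWdist_ne_top [OpensMeasurableSpace X] (hμ : μ ∈ WSet X 1) (hν : ν ∈ WSet X 1) :
    eWdist μ ν ≠ ∞ := by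
  have hμ_prob := hμ.1
  have hν_prob := hν.1
  obtain ⟨x₀, -⟩ := hμ.2
  exact ne_top_of_le_ne_top (ENNReal.add_ne_top.2 ⟨lintegral_edist_ne_top_of_mem_WSet hμ x₀,
    lintegral_edist_ne_top_of_mem_WSet hν x₀⟩) (eWdist_le_lintegral_edist_add x₀)

lemma isSymmetricPoint_iff_Wdist [OpensMeasurableSpace X] (hμ : μ ∈ WSet X 1) (hν : ν ∈ WSet X 1)
    (hη : η ∈ WSet X 1) : IsSymmetricPoint μ ν η ↔
      Wdist 1 μ ν = Wdist 1 ν η ∧ Wdist 1 ν η = (1 / 2) * Wdist 1 μ η := by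
  have hμν := eWdist_ne_top hμ hν
  have hνη := eWdist_ne_top hν hη
  simp only [Wdist_one_eq_toReal_eWdist]
  constructor
  · rintro ⟨heq, hadd⟩
    rw [hadd, ENNReal.toReal_add hμν hνη, heq]
    exact ⟨rfl, by ring⟩
  · rintro ⟨heq, hhalf⟩
    refine ⟨(ENNReal.toReal_eq_toReal_iff' hμν hνη).1 heq, ?_⟩
    rw [← ENNReal.toReal_eq_toReal_iff' (eWdist_ne_top hμ hη) (ENNReal.add_ne_top.2 ⟨hμν, hνη⟩),
      ENNReal.toReal_add hμν hνη]
    linarith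

end Wdist

section Support

variable {X : Type*} [TopologicalSpace X] [MeasurableSpace X] {μ : Measure X}

lemma msupport_eq_support (μ : Measure X) : msupport μ = μ.support := by
  rw [Measure.support_eq_forall_isOpen]
  simp only [msupport, pos_iff_ne_zero]
  exact Set.ext fun x ↦ forall_congr' fun U ↦ forall_comm

lemma exists_measure_lt_pos_and_measure_gt_pos {α : Type*} [LinearOrder α] [DenselyOrdered α]
    [TopologicalSpace α] [OrderClosedTopology α] {f : X → α} (hf : Continuous f)
    (h : (f '' μ.support).Nontrivial) : ∃ t, 0 < μ {x | f x < t} ∧ 0 < μ {x | t < f x} := by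
  obtain ⟨_, ⟨p, hp, rfl⟩, _, ⟨q, hq, rfl⟩, hpq⟩ := h.exists_lt
  obtain ⟨t, hpt, htq⟩ := exists_between hpq
  rw [Measure.mem_support_iff_forall] at hp hq
  exact ⟨t, hp _ ((isOpen_lt hf continuous_const).mem_nhds hpt),
    hq _ ((isOpen_lt continuous_const hf).mem_nhds htq)⟩

end Support

section PushFrom

/-- The point `t` of the real line, moved away from `b` by `c`. The point `b` itself moves to the
right. -/
noncomputable def pushFrom (b c t : ℝ) : ℝ := if b ≤ t then t + c else t - c

variable {b c : ℝ}

lemma measurable_pushFrom (b c : ℝ) : Measurable (pushFrom b c) :=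
  .ite measurableSet_Ici (by fun_prop) (by fun_prop)

lemma abs_sub_pushFrom (hc : 0 ≤ c) (t : ℝ) : |t - pushFrom b c t| = c := by
  unfold pushFrom
  split_ifs <;> simp [abs_of_nonneg hc]

lemma abs_sub_pushFrom_center (hc : 0 ≤ c) (t : ℝ) : |b - pushFrom b c t| = |b - t| + c := by
  unfold pushFrom
  split_ifs <;> grind

lemma pushFrom_injective (hc : 0 ≤ c) : Injective (pushFrom b c) := by
  intro s t
  unfold pushFrom
  split_ifs <;> grind

end PushFrom

section DiagOffset

variable {ε a b c : ℝ}

/-- The coordinate transverse to the lines `diagLine ε a`. The halves make the maximum metric the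
`ℓ¹` metric in the coordinates `diagOffset ε` and `diagOffset (-ε)`, for `ε = ±1`. -/
noncomputable def diagOffset (ε : ℝ) (x : ℝ × ℝ) : ℝ := (x.2 - ε * x.1) / 2

lemma continuous_diagOffset (ε : ℝ) : Continuous (diagOffset ε) := by
  unfold diagOffset
  fun_prop

lemma mem_diagLine_iff {x : ℝ × ℝ} : x ∈ diagLine ε a ↔ diagOffset ε x = a / 2 := by
  simp only [diagLine, diagOffset, mem_ofPred_eq]
  grind

lemma max_abs_eq_abs_half_sub_add_abs_half_add {K : Type*} [Field K] [LinearOrder K]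
    [IsStrictOrderedRing K] (u v : K) :
    max |u| |v| = |(v - u) / 2| + |(v + u) / 2| := by
  grind

lemma dist_eq_abs_diagOffset_add (hε : ε = 1 ∨ ε = -1) (x y : ℝ × ℝ) :
    dist x y = |diagOffset ε x - diagOffset ε y| + |diagOffset (-ε) x - diagOffset (-ε) y| := by
  have hsub (δ : ℝ) : diagOffset δ x - diagOffset δ y = (x.2 - y.2 - δ * (x.1 - y.1)) / 2 := by
    unfold diagOffset
    ring
  rw [Prod.dist_eq, Real.dist_eq, Real.dist_eq, max_abs_eq_abs_half_sub_add_abs_half_add, hsub,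
    hsub]
  rcases hε with rfl | rfl
  · simp only [neg_mul, one_mul, sub_neg_eq_add]
  · simp only [neg_neg, neg_mul, one_mul, sub_neg_eq_add, add_comm]

lemma eq_of_diagOffset_eq (hε : ε = 1 ∨ ε = -1) {x y : ℝ × ℝ}
    (h : diagOffset ε x = diagOffset ε y) (h' : diagOffset (-ε) x = diagOffset (-ε) y) : x = y := by
  rw [← dist_eq_zero, dist_eq_abs_diagOffset_add hε, h, h', sub_self, sub_self, abs_zero, add_zero]

lemma diagOffset_mem_uIcc (hε : ε = 1 ∨ ε = -1) {x y z : ℝ × ℝ}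
    (h : dist x z = dist x y + dist y z) :
    diagOffset ε y ∈ uIcc (diagOffset ε x) (diagOffset ε z) := by
  simp only [dist_eq_abs_diagOffset_add hε] at h
  have htri := abs_sub_le (diagOffset (-ε) x) (diagOffset (-ε) y) (diagOffset (-ε) z)
  rw [mem_uIcc]
  grind

/-- The point `y`, moved along the diagonal of slope `-ε` away from the line `diagLine ε (2 * b)`,
by the distance `c`. -/
noncomputable def diagPush (ε b c : ℝ) (y : ℝ × ℝ) : ℝ × ℝ :=
  (y.1 - ε * (pushFrom b c (diagOffset ε y) - diagOffset ε y),
    y.2 + (pushFrom b c (diagOffset ε y) - diagOffset ε y))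

lemma diagOffset_diagPush (hε : ε = 1 ∨ ε = -1) (b c : ℝ) (y : ℝ × ℝ) :
    diagOffset ε (diagPush ε b c y) = pushFrom b c (diagOffset ε y) := by
  have hεε : ε * ε = 1 := by rcases hε with rfl | rfl <;> norm_num
  unfold diagPush
  set t := pushFrom b c (diagOffset ε y)
  unfold diagOffset
  linear_combination (t - (y.2 - ε * y.1) / 2) / 2 * hεε

lemma diagOffset_neg_diagPush (hε : ε = 1 ∨ ε = -1) (b c : ℝ) (y : ℝ × ℝ) :
    diagOffset (-ε) (diagPush ε b c y) = diagOffset (-ε) y := by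
  have hεε : ε * ε = 1 := by rcases hε with rfl | rfl <;> norm_num
  unfold diagPush
  set t := pushFrom b c (diagOffset ε y)
  unfold diagOffset
  linear_combination ((y.2 - ε * y.1) / 2 - t) / 2 * hεε

lemma measurable_diagPush (ε b c : ℝ) : Measurable (diagPush ε b c) := by
  have hoffset := (continuous_diagOffset ε).measurable
  have hpush := (measurable_pushFrom b c).comp hoffset
  exact (measurable_fst.sub ((hpush.sub hoffset).const_mul ε)).prodMk
    (measurable_snd.add (hpush.sub hoffset))

lemma measurableEmbedding_diagPush (hε : ε = 1 ∨ ε = -1) (hc : 0 ≤ c) :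
    MeasurableEmbedding (diagPush ε b c) := by
  refine (measurable_diagPush ε b c).measurableEmbedding fun y z hyz ↦ ?_
  refine eq_of_diagOffset_eq hε (pushFrom_injective (b := b) hc ?_) ?_
  · rw [← diagOffset_diagPush hε, hyz, diagOffset_diagPush hε]
  · rw [← diagOffset_neg_diagPush hε b c, hyz, diagOffset_neg_diagPush hε]

lemma dist_diagPush (hε : ε = 1 ∨ ε = -1) (hc : 0 ≤ c) (y : ℝ × ℝ) :
    dist y (diagPush ε b c y) = c := by
  rw [dist_eq_abs_diagOffset_add hε, diagOffset_diagPush hε, diagOffset_neg_diagPush hε,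
    abs_sub_pushFrom hc, sub_self, abs_zero, add_zero]

lemma dist_diagPush_of_mem_diagLine (hε : ε = 1 ∨ ε = -1) (hc : 0 ≤ c) {x : ℝ × ℝ}
    (hx : x ∈ diagLine ε a) (y : ℝ × ℝ) :
    dist x (diagPush ε (a / 2) c y) = dist x y + c := by
  rw [dist_eq_abs_diagOffset_add hε, dist_eq_abs_diagOffset_add hε, diagOffset_diagPush hε,
    diagOffset_neg_diagPush hε, mem_diagLine_iff.1 hx, abs_sub_pushFrom_center hc]
  ring

end DiagOffset

section DiagLine

variable {μ ν : Measure (ℝ × ℝ)} {ε a : ℝ}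

lemma exists_isSymmetricPoint_of_ae_mem_diagLine (hμ : μ ∈ WSet (ℝ × ℝ) 1)
    (hε : ε = 1 ∨ ε = -1) (hμL : ∀ᵐ x ∂μ, x ∈ diagLine ε a) (hν : ν ∈ WSet (ℝ × ℝ) 1) :
    ∃ η ∈ WSet (ℝ × ℝ) 1, IsSymmetricPoint μ ν η := by
  have hμ_prob := hμ.1
  have hν_prob := hν.1
  have hfin := eWdist_ne_top hμ hν
  set c := (eWdist μ ν).toReal
  have hc : 0 ≤ c := ENNReal.toReal_nonneg
  have hofReal : ENNReal.ofReal c = eWdist μ ν := ENNReal.ofReal_toReal hfin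
  have hT : MeasurableEmbedding (diagPush ε (a / 2) c) := measurableEmbedding_diagPush hε hc
  have hmove (y : ℝ × ℝ) : edist y (diagPush ε (a / 2) c y) ≤ eWdist μ ν := by
    rw [edist_dist, dist_diagPush hε hc, hofReal]
  have haway (x : ℝ × ℝ) (hx : x ∈ diagLine ε a) (y : ℝ × ℝ) :
      edist x y + eWdist μ ν ≤ edist x (diagPush ε (a / 2) c y) := by
    rw [edist_dist, edist_dist, dist_diagPush_of_mem_diagLine hε hc hx,
      ENNReal.ofReal_add dist_nonneg hc, hofReal]
  exact ⟨_, map_mem_WSet hT.measurable hfin hmove hν,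
    isSymmetricPoint_map hμL (lintegral_edist_ne_top_of_mem_WSet hν) hT hmove haway⟩

lemma exists_ae_diagOffset_one_sided {y z : ℝ × ℝ} (hzy : z ≠ y)
    (h : ∀ᵐ x ∂μ, dist x z = dist x y + dist y z) :
    ∃ ε : ℝ, (ε = 1 ∨ ε = -1) ∧ ((∀ᵐ x ∂μ, diagOffset ε x ≤ diagOffset ε y) ∨
      ∀ᵐ x ∂μ, diagOffset ε y ≤ diagOffset ε x) := by
  obtain ⟨ε, hε, hne⟩ : ∃ ε : ℝ, (ε = 1 ∨ ε = -1) ∧ diagOffset ε z ≠ diagOffset ε y := by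
    by_contra! heq
    exact hzy (eq_of_diagOffset_eq (.inl rfl) (heq 1 (.inl rfl)) (heq (-1) (.inr rfl)))
  have hmem : ∀ᵐ x ∂μ, diagOffset ε y ∈ uIcc (diagOffset ε x) (diagOffset ε z) :=
    h.mono fun x ↦ diagOffset_mem_uIcc hε
  simp only [mem_uIcc] at hmem
  refine ⟨ε, hε, ?_⟩
  rcases hne.lt_or_gt with hlt | hgt
  · exact .inr (hmem.mono fun x hx ↦ by grind)
  · exact .inl (hmem.mono fun x hx ↦ by grind)

lemma exists_diagOffset_eq (s t : ℝ) :
    ∃ y : ℝ × ℝ, diagOffset 1 y = s ∧ diagOffset (-1) y = t :=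
  ⟨(t - s, t + s), by unfold diagOffset; ring, by unfold diagOffset; ring⟩

lemma nontrivial_diagOffset_image_support (h : ∀ a, ¬ μ.support ⊆ diagLine ε a) :
    (diagOffset ε '' μ.support).Nontrivial := by
  obtain ⟨p, hp, -⟩ := not_subset.1 (h 0)
  obtain ⟨q, hq, hqp⟩ := not_subset.1 (h (2 * diagOffset ε p))
  refine ⟨_, mem_image_of_mem _ hq, _, mem_image_of_mem _ hp, fun heq ↦ hqp ?_⟩
  rw [mem_diagLine_iff, heq, mul_div_cancel_left₀ _ two_ne_zero]

lemma exists_support_subset_diagLine (hμ : μ ∈ WSet (ℝ × ℝ) 1)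
    (h : ∀ y, ∃ η ∈ WSet (ℝ × ℝ) 1, IsSymmetricPoint μ (.dirac y) η) :
    ∃ ε a : ℝ, (ε = 1 ∨ ε = -1) ∧ μ.support ⊆ diagLine ε a := by
  by_contra! hsupp
  have hμ_prob := hμ.1
  have hsplit (ε : ℝ) (hε : ε = 1 ∨ ε = -1) :
      ∃ t, 0 < μ {x | diagOffset ε x < t} ∧ 0 < μ {x | t < diagOffset ε x} :=
    exists_measure_lt_pos_and_measure_gt_pos (continuous_diagOffset ε)
      (nontrivial_diagOffset_image_support fun a ↦ hsupp ε a hε)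
  obtain ⟨y, hy⟩ : ∃ y, ∀ ε : ℝ, ε = 1 ∨ ε = -1 →
      0 < μ {x | diagOffset ε x < diagOffset ε y} ∧
        0 < μ {x | diagOffset ε y < diagOffset ε x} := by
    obtain ⟨s, hs⟩ := hsplit 1 (.inl rfl)
    obtain ⟨t, ht⟩ := hsplit (-1) (.inr rfl)
    obtain ⟨y, rfl, rfl⟩ := exists_diagOffset_eq s t
    exact ⟨y, by rintro ε (rfl | rfl) <;> assumption⟩
  have hone_sided : ¬ ∃ ε : ℝ, (ε = 1 ∨ ε = -1) ∧
      ((∀ᵐ x ∂μ, diagOffset ε x ≤ diagOffset ε y) ∨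
        ∀ᵐ x ∂μ, diagOffset ε y ≤ diagOffset ε x) := by
    rintro ⟨ε, hε, hle | hge⟩
    · exact (hy ε hε).2.ne' (by simpa only [ae_iff, not_le] using hle)
    · exact (hy ε hε).1.ne' (by simpa only [ae_iff, not_le] using hge)
  obtain ⟨η, hη, hsymm⟩ := h y
  have hη_prob := hη.1
  have hμy : ¬ ∀ᵐ x ∂μ, x = y := fun hxy ↦
    hone_sided ⟨1, .inl rfl, .inl (hxy.mono fun x hx ↦ by rw [hx])⟩
  obtain ⟨z, hzy, hz⟩ := hsymm.exists_ae_edist_add_edist_eq (eWdist_ne_top hμ hη) hμy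
  refine hone_sided (exists_ae_diagOffset_one_sided hzy (hz.mono fun x hx ↦ ?_))
  rw [dist_edist, dist_edist, dist_edist, hx,
    ENNReal.toReal_add (edist_ne_top x y) (edist_ne_top y z)]

end DiagLine

/-- A measure `μ ∈ 𝒲₁(ℝ², d_m)` is supported on a diagonal line if and only if it admits
a symmetric point with respect to every other measure. -/
theorem diag_line_support_characterization (μ : Measure (ℝ × ℝ))
    (hμ : μ ∈ WSet (ℝ × ℝ) 1) :
    (∃ ε a : ℝ, (ε = 1 ∨ ε = -1) ∧ msupport μ ⊆ diagLine ε a) ↔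
    (∀ ν ∈ WSet (ℝ × ℝ) 1, ∃ η ∈ WSet (ℝ × ℝ) 1,
      Wdist 1 μ ν = Wdist 1 ν η ∧ Wdist 1 ν η = (1 / 2) * Wdist 1 μ η) := by
  simp only [msupport_eq_support]
  constructor
  · rintro ⟨ε, a, hε, hsupp⟩ ν hν
    have hμL : ∀ᵐ x ∂μ, x ∈ diagLine ε a :=
      Filter.mem_of_superset Measure.support_mem_ae hsupp
    obtain ⟨η, hη, hsymm⟩ := exists_isSymmetricPoint_of_ae_mem_diagLine hμ hε hμL hν
    exact ⟨η, hη, (isSymmetricPoint_iff_Wdist hμ hν hη).1 hsymm⟩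
  · intro h
    refine exists_support_subset_diagLine hμ fun y ↦ ?_
    obtain ⟨η, hη, hW⟩ := h (.dirac y) (dirac_mem_WSet y)
    exact ⟨η, hη, (isSymmetricPoint_iff_Wdist hμ (dirac_mem_WSet y) hη).2 hW⟩
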